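/- Let w be a smooth function on an open interval I ⊆ ℝ and let ψ_0 be a nowhere-vanishing smooth function on I satisfying (L1) and (L2) with w and a parameter α; define the sequence ψ_n by the recursion. Then for every N ≥ 3, the identity τ_N[0,…,N−2,N+2] + 2·τ_N[0,…,N−3,N−1,N+1] + τ_N[0,…,N−4,N−2,N−1,N] = τ_N''' + (3/2)·w·τ_N' + (1/2)·w'·τ_N holds on I. -/

import Mathlib

/-- The `N×N` determinant with `(i,j)` entry `ψ_{i-1+c_j}` (rows/columns indexed from 0),
i.e. the Hankel determinant of the sequence `ψ` with column offsets `c`.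
`tauShift ψ N (fun j => j)` is the Hankel determinant `τ_N` itself. -/
noncomputable def tauShift (ψ : ℕ → ℝ → ℝ) (N : ℕ) (c : Fin N → ℕ) (z : ℝ) : ℝ :=
  Matrix.det (Matrix.of fun i j : Fin N => ψ ((i : ℕ) + c j) z)

/-! Set `H = (ψ_{i + c_j})`. By Jacobi's formula `(det H)' = tr (adj H * H')`. The quadratic part
of the recursion splits as `∑_{k < i + c_j} = ∑_{k < i} + ∑_{k ≥ i}`: the first half is `L * H` with
`L` strictly lower triangular Toeplitz, so it contributes `tr L * det H = 0`, and the second half is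
a combination of columns with smaller offsets. Writing `τ_λ` for the determinant whose offsets
exceed `0, …, N - 1` by the parts of a partition `λ`, this says
`τ_λ' = ∑ τ_{λ + □} - γ ∑_r ψ_{r - 1} (p_r^⊥ τ)_λ` with `γ = w / (2 ψ_0)`,
where `p_r^⊥` removes border strips of length `r` with the Murnaghan–Nakayama signs. Since
`γ ψ_0 = w / 2`, we get `τ' = τ_1` and `τ'' = τ_2 + τ_{11} - (w / 2) τ`. In `τ_2' + τ_{11}'` the two
`ψ_1` terms cancel, leaving `τ_3 + 2 τ_{21} + τ_{111} - w τ'`. -/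

section Jacobi

open Finset Matrix

theorem trace_adjugate_mul {n R : Type*} [Fintype n] [DecidableEq n] [CommRing R]
    (A B : Matrix n n R) : (adjugate A * B).trace = ∑ j, cramer A (B.col j) j :=
  sum_congr rfl fun j _ => by rw [cramer_eq_adjugate_mulVec]; rfl

theorem trace_adjugate_mul_mul {n R : Type*} [Fintype n] [DecidableEq n] [CommRing R]
    (A L : Matrix n n R) : (adjugate A * (L * A)).trace = L.trace * A.det := by
  rw [trace_mul_comm, Matrix.mul_assoc, mul_adjugate, mul_smul_one, trace_smul, smul_eq_mul,
    mul_comm]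

theorem hasDerivAt_det {n 𝕜 𝔸 : Type*} [Fintype n] [DecidableEq n] [NontriviallyNormedField 𝕜]
    [NormedCommRing 𝔸] [NormedAlgebra 𝕜 𝔸] {A : 𝕜 → Matrix n n 𝔸} {A' : Matrix n n 𝔸} {z : 𝕜}
    (hA : ∀ i j, HasDerivAt (fun t => A t i j) (A' i j) z) :
    HasDerivAt (fun t => (A t).det) (adjugate (A z) * A').trace z := by
  have hleibniz : HasDerivAt
      (fun t => ∑ σ : Equiv.Perm n, ((Equiv.Perm.sign σ : ℤ) : 𝔸) * ∏ i, A t (σ i) i)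
      (∑ σ : Equiv.Perm n, ((Equiv.Perm.sign σ : ℤ) : 𝔸) *
        ∑ j, (∏ i ∈ univ.erase j, A z (σ i) i) • A' (σ j) j) z :=
    HasDerivAt.fun_sum fun σ _ =>
      (HasDerivAt.fun_finsetProd fun i _ => hA (σ i) i).const_mul _
  simp only [← det_apply'] at hleibniz
  convert hleibniz using 1
  simp only [trace_adjugate_mul, cramer_apply, det_apply', mul_sum]
  rw [sum_comm]
  refine sum_congr rfl fun σ _ => sum_congr rfl fun j _ => congrArg _ ?_
  rw [← prod_erase_mul univ _ (mem_univ j), updateCol_self, smul_eq_mul]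
  exact congrArg (· * _) (prod_congr rfl fun i hi => updateCol_ne (ne_of_mem_erase hi))

end Jacobi

section HankelDet

open Finset Matrix Function

variable {R : Type*} [CommRing R] {n : ℕ}

/-- The `n × n` matrix with columns `(u (c j), u (c j + 1), …)`, a Hankel matrix when `c j = j`. -/
def hankelMatrix (u : ℕ → R) (c : Fin n → ℕ) : Matrix (Fin n) (Fin n) R :=
  Matrix.of fun i j => u (i + c j)

/-- The determinant `τ_n[c_1, …, c_n]` of a sequence in a commutative ring: over `ℝ`,
`tauShift ψ n c z` unfolds to `hankelDet (ψ · z) c`. -/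
def hankelDet (u : ℕ → R) (c : Fin n → ℕ) : R :=
  (hankelMatrix u c).det

theorem hankelDet_eq_zero_of_not_injective (u : ℕ → R) {c : Fin n → ℕ} (hc : ¬ Injective c) :
    hankelDet u c = 0 := by
  obtain ⟨i, j, hij, hne⟩ := not_injective_iff.1 hc
  exact det_zero_of_column_eq hne fun k => by simp only [hankelMatrix, of_apply, hij]

theorem hankelDet_comp_swap (u : ℕ → R) (c : Fin n → ℕ) {i j : Fin n} (hij : i ≠ j) :
    hankelDet u (c ∘ Equiv.swap i j) = -hankelDet u c := by
  have h := det_permute' (Equiv.swap i j) (hankelMatrix u c)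
  rw [Equiv.Perm.sign_swap hij, Units.val_neg, Units.val_one, Int.cast_neg, Int.cast_one,
    neg_one_mul] at h
  exact h

theorem cramer_hankelMatrix (u : ℕ → R) (c : Fin n → ℕ) (j : Fin n) (m : ℕ) :
    cramer (hankelMatrix u c) (fun i => u (i + m)) j = hankelDet u (update c j m) := by
  rw [cramer_apply, hankelDet]
  congr 1
  ext i k
  obtain rfl | hkj := eq_or_ne k j
  · simp [hankelMatrix]
  · simp [hankelMatrix, hkj]

theorem trace_adjugate_mul_hankelMatrix (u : ℕ → R) (c d : Fin n → ℕ) :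
    (adjugate (hankelMatrix u c) * hankelMatrix u d).trace =
      ∑ j, hankelDet u (update c j (d j)) := by
  simp only [trace_adjugate_mul, ← cramer_hankelMatrix]
  rfl

/-- The strictly lower triangular Toeplitz matrix with `u 0, u 1, …` below the diagonal, whose
product with `hankelMatrix u c` is the part `k < i` of the sum of `u k * u (i + c j - 1 - k)`. -/
def lowerToeplitz (u : ℕ → R) (n : ℕ) : Matrix (Fin n) (Fin n) R :=
  Matrix.of fun i m => if m < i then u (i - 1 - m) else 0

theorem trace_lowerToeplitz (u : ℕ → R) (n : ℕ) : (lowerToeplitz u n).trace = 0 := by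
  simp [lowerToeplitz, trace]

theorem lowerToeplitz_mul_hankelMatrix_apply (u : ℕ → R) (c : Fin n → ℕ) (i j : Fin n) :
    (lowerToeplitz u n * hankelMatrix u c) i j =
      ∑ m ∈ range i, u (i - 1 - m) * u (m + c j) := by
  simp only [mul_apply, lowerToeplitz, hankelMatrix, of_apply, Fin.lt_def, ite_mul, zero_mul]
  rw [Fin.sum_univ_eq_sum_range (fun m => if m < (i : ℕ) then u (i - 1 - m) * u (m + c j) else 0),
    ← sum_filter]
  congr 1
  ext m
  simp only [mem_filter, mem_range]
  omega

theorem sum_range_add_convolution (u : ℕ → R) (a b : ℕ) :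
    ∑ k ∈ range (a + b), u k * u (a + b - 1 - k) =
      ∑ m ∈ range a, u (a - 1 - m) * u (m + b) + ∑ m ∈ range b, u (b - 1 - m) * u (a + m) := by
  rw [sum_range_add, ← sum_range_reflect (fun k => u k * u (a + b - 1 - k)) a]
  congr 1 <;> refine sum_congr rfl fun m hm => ?_ <;> rw [mem_range] at hm
  · rw [show a + b - 1 - (a - 1 - m) = m + b by omega]
  · rw [show a + b - 1 - (a + m) = b - 1 - m by omega, mul_comm]

end HankelDet

section Riccati

open Finset Matrix Function

variable {𝕜 𝔸 : Type*} [NontriviallyNormedField 𝕜] [NormedCommRing 𝔸] [NormedAlgebra 𝕜 𝔸]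
  {ψ : ℕ → 𝕜 → 𝔸} {γ : 𝔸} {z : 𝕜}

/-- The recursion for `ψ_n`, solved for the derivative at `z`, where `γ` is the value of
`w / (2 ψ_0)`. Equivalently, the generating function `F(s) = ∑ ψ_n s ^ n` satisfies the
Riccati equation `F' = (F - ψ_0) / s - γ s F ^ 2`. -/
def HasRiccatiDerivAt (ψ : ℕ → 𝕜 → 𝔸) (γ : 𝔸) (z : 𝕜) : Prop :=
  ∀ n, HasDerivAt (ψ n) (ψ (n + 1) z - γ * ∑ k ∈ range n, ψ k z * ψ (n - 1 - k) z) z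

theorem HasRiccatiDerivAt.hasDerivAt_hankelDet (h : HasRiccatiDerivAt ψ γ z) {n : ℕ}
    (c : Fin n → ℕ) :
    HasDerivAt (fun t => hankelDet (ψ · t) c)
      (∑ j, hankelDet (ψ · z) (update c j (c j + 1)) - γ * ∑ j, ∑ m ∈ range (c j),
        ψ (c j - 1 - m) z * hankelDet (ψ · z) (update c j m)) z := by
  let u : ℕ → 𝔸 := (ψ · z)
  let K : Matrix (Fin n) (Fin n) 𝔸 :=
    Matrix.of fun i j => ∑ m ∈ range (c j), u (c j - 1 - m) * u (i + m)
  have hentry : ∀ i j : Fin n, HasDerivAt (fun t => hankelMatrix (ψ · t) c i j)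
      ((hankelMatrix u (c · + 1) - γ • (lowerToeplitz u n * hankelMatrix u c + K)) i j) z := by
    intro i j
    rw [Matrix.sub_apply, Matrix.smul_apply, Matrix.add_apply,
      lowerToeplitz_mul_hankelMatrix_apply]
    exact (h (i + c j)).congr_deriv (by rw [sum_range_add_convolution u]; rfl)
  have hlower : (adjugate (hankelMatrix u c) * K).trace =
      ∑ j, ∑ m ∈ range (c j), u (c j - 1 - m) * hankelDet u (update c j m) := by
    rw [trace_adjugate_mul]
    refine sum_congr rfl fun j _ => ?_
    have hcol : K.col j = ∑ m ∈ range (c j), u (c j - 1 - m) • fun i : Fin n => u (i + m) := by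
      ext i
      simp [K]
    simp only [hcol, map_sum, map_smul, Finset.sum_apply, Pi.smul_apply, cramer_hankelMatrix,
      smul_eq_mul]
  refine (hasDerivAt_det hentry).congr_deriv ?_
  change (adjugate (hankelMatrix u c) * _).trace = _
  rw [Matrix.mul_sub, Matrix.mul_smul, Matrix.mul_add, trace_sub, trace_smul, trace_add,
    trace_adjugate_mul_mul, trace_lowerToeplitz, zero_mul, zero_add,
    trace_adjugate_mul_hankelMatrix, hlower, smul_eq_mul]

end Riccati

section Tail

open Finset Matrix Function

variable {R : Type*} [CommRing R] {M k : ℕ}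

/-- The offsets `0, …, M - 1, M + e_0, …, M + e_{k - 1}`, so that only the last `k` columns of the
Hankel matrix move. For `k = 3` the partition `λ` corresponds to `e = ![λ₃, 1 + λ₂, 2 + λ₁]`. -/
def tailOffsets (M : ℕ) {k : ℕ} (e : Fin k → ℕ) : Fin (M + k) → ℕ :=
  Fin.append (fun i : Fin M => (i : ℕ)) (fun j => M + e j)

@[simp] theorem tailOffsets_castAdd (e : Fin k → ℕ) (i : Fin M) :
    tailOffsets M e (Fin.castAdd k i) = i :=
  Fin.append_left _ _ i

@[simp] theorem tailOffsets_natAdd (e : Fin k → ℕ) (j : Fin k) :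
    tailOffsets M e (Fin.natAdd M j) = M + e j :=
  Fin.append_right _ _ j

theorem eq_tailOffsets {c : Fin (M + k) → ℕ} {e : Fin k → ℕ}
    (hc : ∀ i : Fin M, c (Fin.castAdd k i) = i) (he : ∀ j, c (Fin.natAdd M j) = M + e j) :
    c = tailOffsets M e :=
  funext fun i => i.addCases (fun i => by simp [hc]) fun j => by simp [he]

theorem update_tailOffsets (e : Fin k → ℕ) (j : Fin k) (m : ℕ) :
    update (tailOffsets M e) (Fin.natAdd M j) (M + m) = tailOffsets M (update e j m) := by
  refine eq_tailOffsets (fun i => ?_) fun i => ?_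
  · have hne : Fin.castAdd k i ≠ Fin.natAdd M j := by
      rw [ne_eq, Fin.ext_iff, Fin.val_natAdd, Fin.val_castAdd]; omega
    rw [update_of_ne hne, tailOffsets_castAdd]
  · obtain rfl | hij := eq_or_ne i j
    · simp
    · rw [update_of_ne (by simpa using hij), update_of_ne hij, tailOffsets_natAdd]

theorem hankelDet_tailOffsets_eq_zero (u : ℕ → R) {e : Fin k → ℕ} (he : ¬ Injective e) :
    hankelDet u (tailOffsets M e) = 0 := by
  refine hankelDet_eq_zero_of_not_injective u fun h => he fun i j hij => ?_
  simpa using @h (Fin.natAdd M i) (Fin.natAdd M j) (by simp [hij])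

theorem hankelDet_update_tailOffsets_eq_zero (u : ℕ → R) (e : Fin k → ℕ) {i : Fin (M + k)} {m : ℕ}
    (hm : m < M) (hi : (i : ℕ) ≠ m) : hankelDet u (update (tailOffsets M e) i m) = 0 := by
  let m' : Fin (M + k) := Fin.castAdd k ⟨m, hm⟩
  have hne : m' ≠ i := fun h => hi (by rw [← h]; rfl)
  refine hankelDet_eq_zero_of_not_injective u fun h => hne (h ?_)
  rw [update_of_ne hne, update_self, tailOffsets_castAdd]

theorem hankelDet_update_tailOffsets_succ_eq_zero (u : ℕ → R) {e : Fin k → ℕ} (he : ∃ j, e j = 0)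
    (i : Fin M) : hankelDet u (update (tailOffsets M e) (Fin.castAdd k i) (i + 1)) = 0 := by
  obtain hi | hi := lt_or_ge ((i : ℕ) + 1) M
  · exact hankelDet_update_tailOffsets_eq_zero u e hi (by simp)
  · obtain ⟨j, hj⟩ := he
    have hne : Fin.natAdd M j ≠ Fin.castAdd k i := by
      rw [ne_eq, Fin.ext_iff, Fin.val_natAdd, Fin.val_castAdd]; omega
    refine hankelDet_eq_zero_of_not_injective u fun hinj => hne (hinj ?_)
    rw [update_of_ne hne, update_self, tailOffsets_natAdd]
    omega

theorem hankelDet_tailOffsets_comp_swap (u : ℕ → R) (e : Fin k → ℕ) {i j : Fin k} (hij : i ≠ j) :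
    hankelDet u (tailOffsets M (e ∘ Equiv.swap i j)) = -hankelDet u (tailOffsets M e) := by
  rw [← hankelDet_comp_swap u (tailOffsets M e) (i := Fin.natAdd M i) (j := Fin.natAdd M j)
    (by simpa using hij)]
  simp only [Equiv.comp_swap_eq_update, tailOffsets_natAdd, update_tailOffsets]

end Tail

section Schur

open Finset Matrix Function

variable {𝕜 𝔸 : Type*} [NontriviallyNormedField 𝕜] [NormedCommRing 𝔸] [NormedAlgebra 𝕜 𝔸]
  {ψ : ℕ → 𝕜 → 𝔸} {z : 𝕜}

theorem HasRiccatiDerivAt.hasDerivAt_hankelDet_tailOffsets {γ : 𝔸} (h : HasRiccatiDerivAt ψ γ z)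
    (M : ℕ) {k : ℕ} {e : Fin k → ℕ} (he : ∃ j, e j = 0) :
    HasDerivAt (fun t => hankelDet (ψ · t) (tailOffsets M e))
      (∑ j, hankelDet (ψ · z) (tailOffsets M (update e j (e j + 1))) -
        γ * ∑ j, ∑ m ∈ range (e j),
          ψ (e j - 1 - m) z * hankelDet (ψ · z) (tailOffsets M (update e j m))) z := by
  refine (h.hasDerivAt_hankelDet (tailOffsets M e)).congr_deriv ?_
  have hlower_head (i : Fin M) : ∑ m ∈ range (i : ℕ), ψ (i - 1 - m) z *
      hankelDet (ψ · z) (update (tailOffsets M e) (Fin.castAdd k i) m) = 0 :=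
    sum_eq_zero fun m hm => by
      have hmi := mem_range.1 hm
      rw [hankelDet_update_tailOffsets_eq_zero _ e (hmi.trans i.isLt) hmi.ne', mul_zero]
  have hlower_tail (j : Fin k) : ∑ m ∈ range (M + e j), ψ (M + e j - 1 - m) z *
      hankelDet (ψ · z) (update (tailOffsets M e) (Fin.natAdd M j) m) =
      ∑ m ∈ range (e j), ψ (e j - 1 - m) z *
        hankelDet (ψ · z) (tailOffsets M (update e j m)) := by
    rw [sum_range_add, sum_eq_zero, zero_add]
    · refine sum_congr rfl fun m _ => ?_
      rw [update_tailOffsets, show M + e j - 1 - (M + m) = e j - 1 - m by omega]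
    · intro m hm
      have hmM := mem_range.1 hm
      rw [hankelDet_update_tailOffsets_eq_zero _ e hmM (hmM.trans_le (M.le_add_right j)).ne',
        mul_zero]
  simp only [Fin.sum_univ_add, tailOffsets_castAdd, tailOffsets_natAdd,
    hankelDet_update_tailOffsets_succ_eq_zero _ he, hlower_head, hlower_tail,
    sum_const_zero, zero_add, add_assoc, update_tailOffsets]

theorem hankelDet_tailOffsets_triple_eq_zero {R : Type*} [CommRing R] (u : ℕ → R) (M : ℕ)
    {p q r : ℕ} (h : p = q ∨ p = r ∨ q = r) : hankelDet u (tailOffsets M ![p, q, r]) = 0 := by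
  refine hankelDet_tailOffsets_eq_zero u fun hinj => ?_
  obtain h | h | h := h
  · exact absurd (@hinj 0 1 h) (by decide)
  · exact absurd (@hinj 0 2 h) (by decide)
  · exact absurd (@hinj 1 2 h) (by decide)

theorem HasRiccatiDerivAt.hasDerivAt_hankelDet_triple {γ : 𝔸} (h : HasRiccatiDerivAt ψ γ z)
    (M q r : ℕ) :
    HasDerivAt (fun t => hankelDet (ψ · t) (tailOffsets M ![0, q, r]))
      (hankelDet (ψ · z) (tailOffsets M ![1, q, r]) +
        hankelDet (ψ · z) (tailOffsets M ![0, q + 1, r]) +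
        hankelDet (ψ · z) (tailOffsets M ![0, q, r + 1]) -
        γ * (∑ m ∈ range q, ψ (q - 1 - m) z * hankelDet (ψ · z) (tailOffsets M ![0, m, r]) +
          ∑ m ∈ range r, ψ (r - 1 - m) z * hankelDet (ψ · z) (tailOffsets M ![0, q, m]))) z := by
  refine (h.hasDerivAt_hankelDet_tailOffsets M ⟨0, rfl⟩).congr_deriv ?_
  have hfst (m : ℕ) : update ![0, q, r] 0 m = ![m, q, r] := by ext i; fin_cases i <;> rfl
  have hsnd (m : ℕ) : update ![0, q, r] 1 m = ![0, m, r] := by ext i; fin_cases i <;> rfl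
  have hthd (m : ℕ) : update ![0, q, r] 2 m = ![0, q, m] := by ext i; fin_cases i <;> rfl
  simp [Fin.sum_univ_three, hfst, hsnd, hthd]

theorem HasRiccatiDerivAt.hasDerivAt_hankelDet_012 {γ : 𝔸} (h : HasRiccatiDerivAt ψ γ z)
    (M : ℕ) :
    HasDerivAt (fun t => hankelDet (ψ · t) (tailOffsets M ![0, 1, 2]))
      (hankelDet (ψ · z) (tailOffsets M ![0, 1, 3])) z :=
  (h.hasDerivAt_hankelDet_triple M 1 2).congr_deriv <| by
    simp [sum_range_succ, hankelDet_tailOffsets_triple_eq_zero]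

theorem HasRiccatiDerivAt.hasDerivAt_hankelDet_013 {γ : 𝔸} (h : HasRiccatiDerivAt ψ γ z) (M : ℕ) :
    HasDerivAt (fun t => hankelDet (ψ · t) (tailOffsets M ![0, 1, 3]))
      (hankelDet (ψ · z) (tailOffsets M ![0, 2, 3]) +
        hankelDet (ψ · z) (tailOffsets M ![0, 1, 4]) -
        γ * (ψ 0 z * hankelDet (ψ · z) (tailOffsets M ![0, 1, 2]))) z :=
  (h.hasDerivAt_hankelDet_triple M 1 3).congr_deriv <| by
    simp [sum_range_succ, hankelDet_tailOffsets_triple_eq_zero]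

theorem HasRiccatiDerivAt.hasDerivAt_hankelDet_014 {γ : 𝔸} (h : HasRiccatiDerivAt ψ γ z) (M : ℕ) :
    HasDerivAt (fun t => hankelDet (ψ · t) (tailOffsets M ![0, 1, 4]))
      (hankelDet (ψ · z) (tailOffsets M ![0, 2, 4]) +
        hankelDet (ψ · z) (tailOffsets M ![0, 1, 5]) -
        γ * (ψ 1 z * hankelDet (ψ · z) (tailOffsets M ![0, 1, 2]) +
          ψ 0 z * hankelDet (ψ · z) (tailOffsets M ![0, 1, 3]))) z :=
  (h.hasDerivAt_hankelDet_triple M 1 4).congr_deriv <| by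
    simp [sum_range_succ, hankelDet_tailOffsets_triple_eq_zero]

theorem HasRiccatiDerivAt.hasDerivAt_hankelDet_023 {γ : 𝔸} (h : HasRiccatiDerivAt ψ γ z)
    (M : ℕ) :
    HasDerivAt (fun t => hankelDet (ψ · t) (tailOffsets M ![0, 2, 3]))
      (hankelDet (ψ · z) (tailOffsets M ![1, 2, 3]) +
        hankelDet (ψ · z) (tailOffsets M ![0, 2, 4]) -
        γ * (ψ 0 z * hankelDet (ψ · z) (tailOffsets M ![0, 1, 3]) -
          ψ 1 z * hankelDet (ψ · z) (tailOffsets M ![0, 1, 2]))) z :=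
  (h.hasDerivAt_hankelDet_triple M 2 3).congr_deriv <| by
    have hswap : hankelDet (ψ · z) (tailOffsets M ![0, 2, 1]) =
        -hankelDet (ψ · z) (tailOffsets M ![0, 1, 2]) := by
      rw [← hankelDet_tailOffsets_comp_swap _ _ (show (1 : Fin 3) ≠ 2 by decide)]
      congr 2
      ext i; fin_cases i <;> rfl
    simp [sum_range_succ, hankelDet_tailOffsets_triple_eq_zero, hswap, sub_eq_add_neg]

theorem hankelDet_third_deriv_sum {I : Set 𝕜} (hI : IsOpen I) {γ g : 𝕜 → 𝔸}
    (hψ : ∀ z ∈ I, HasRiccatiDerivAt ψ (γ z) z) (hg : ∀ z ∈ I, γ z * ψ 0 z = g z)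
    (hg' : DifferentiableOn 𝕜 g I) (M : ℕ) (hz : z ∈ I) :
    hankelDet (ψ · z) (tailOffsets M ![0, 1, 5]) +
        2 * hankelDet (ψ · z) (tailOffsets M ![0, 2, 4]) +
        hankelDet (ψ · z) (tailOffsets M ![1, 2, 3]) =
      deriv (deriv (deriv fun t => hankelDet (ψ · t) (tailOffsets M ![0, 1, 2]))) z +
        3 * g z * deriv (fun t => hankelDet (ψ · t) (tailOffsets M ![0, 1, 2])) z +
        deriv g z * hankelDet (ψ · z) (tailOffsets M ![0, 1, 2]) := by
  have hderiv : Set.EqOn (deriv fun t => hankelDet (ψ · t) (tailOffsets M ![0, 1, 2]))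
      (fun t => hankelDet (ψ · t) (tailOffsets M ![0, 1, 3])) I :=
    fun t ht => ((hψ t ht).hasDerivAt_hankelDet_012 M).deriv
  have hderiv₂ : Set.EqOn (deriv (deriv fun t => hankelDet (ψ · t) (tailOffsets M ![0, 1, 2])))
      (fun t => hankelDet (ψ · t) (tailOffsets M ![0, 2, 3]) +
        hankelDet (ψ · t) (tailOffsets M ![0, 1, 4]) -
        g t * hankelDet (ψ · t) (tailOffsets M ![0, 1, 2])) I := fun t ht => by
    rw [hderiv.deriv hI ht, ((hψ t ht).hasDerivAt_hankelDet_013 M).deriv, ← mul_assoc, hg t ht]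
  have hgz := (hg'.differentiableAt (hI.mem_nhds hz)).hasDerivAt
  have hderiv₃ := (((hψ z hz).hasDerivAt_hankelDet_023 M).fun_add
    ((hψ z hz).hasDerivAt_hankelDet_014 M)).fun_sub
      (hgz.fun_mul ((hψ z hz).hasDerivAt_hankelDet_012 M))
  rw [hderiv₂.deriv hI hz, hderiv hz, hderiv₃.deriv]
  linear_combination 2 * hankelDet (ψ · z) (tailOffsets M ![0, 1, 3]) * hg z hz

end Schur

theorem contDiffOn_of_riccati_rec {𝕜 𝔸 : Type*} [NontriviallyNormedField 𝕜] [NormedCommRing 𝔸]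
    [NormedAlgebra 𝕜 𝔸] {I : Set 𝕜} (hI : IsOpen I) {γ : 𝕜 → 𝔸} {ψ : ℕ → 𝕜 → 𝔸}
    (hγ : ContDiffOn 𝕜 (⊤ : ℕ∞) γ I)
    (hψ₀ : ContDiffOn 𝕜 (⊤ : ℕ∞) (ψ 0) I)
    (hψ : ∀ n, ∀ z ∈ I, ψ (n + 1) z =
      deriv (ψ n) z + γ z * ∑ k ∈ Finset.range n, ψ k z * ψ (n - 1 - k) z) (n : ℕ) :
    ContDiffOn 𝕜 (⊤ : ℕ∞) (ψ n) I := by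
  induction n using Nat.strong_induction_on with
  | _ n ih =>
    obtain _ | n := n
    · exact hψ₀
    · have hderiv := (ih n n.lt_succ_self).deriv_of_isOpen (m := (⊤ : ℕ∞)) hI le_rfl
      refine (hderiv.add (hγ.mul (ContDiffOn.sum fun k hk => ?_))).congr (hψ n)
      have hkn := Finset.mem_range.1 hk
      exact (ih k (by omega)).mul (ih (n - 1 - k) (by omega))

theorem tau_shift_third_deriv_sum_general {𝕜 : Type*} [NontriviallyNormedField 𝕜]
    [NeZero (2 : 𝕜)] {I : Set 𝕜} (hI : IsOpen I) {w : 𝕜 → 𝕜} (hw : DifferentiableOn 𝕜 w I)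
    {ψ : ℕ → 𝕜 → 𝕜} (hψ : ∀ n, DifferentiableOn 𝕜 (ψ n) I) (hψ₀ : ∀ z ∈ I, ψ 0 z ≠ 0)
    (hψ_rec : ∀ n, ∀ z ∈ I, ψ (n + 1) z = deriv (ψ n) z +
      w z / (2 * ψ 0 z) * ∑ k ∈ Finset.range n, ψ k z * ψ (n - 1 - k) z)
    {N : ℕ} (hN : 3 ≤ N) {z : 𝕜} (hz : z ∈ I) :
    hankelDet (ψ · z) (fun j : Fin N => if (j : ℕ) = N - 1 then N + 2 else j) +
        2 * hankelDet (ψ · z) (fun j : Fin N =>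
          if (j : ℕ) = N - 1 then j + 2 else if (j : ℕ) = N - 2 then j + 1 else j) +
        hankelDet (ψ · z) (fun j : Fin N => if N - 3 ≤ (j : ℕ) then j + 1 else j) =
      deriv (deriv (deriv fun t => hankelDet (ψ · t) (fun j : Fin N => (j : ℕ)))) z +
        3 / 2 * w z * deriv (fun t => hankelDet (ψ · t) (fun j : Fin N => (j : ℕ))) z +
        1 / 2 * deriv w z * hankelDet (ψ · z) (fun j : Fin N => (j : ℕ)) := by
  obtain ⟨M, rfl⟩ := Nat.exists_eq_add_of_le' hN
  have hriccati (t) (ht : t ∈ I) : HasRiccatiDerivAt ψ (w t / (2 * ψ 0 t)) t := fun n => by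
    rw [hψ_rec n t ht, add_sub_cancel_right]
    exact ((hψ n).differentiableAt (hI.mem_nhds ht)).hasDerivAt
  have hwψ (t) (ht : t ∈ I) : w t / (2 * ψ 0 t) * ψ 0 t = w t / 2 := by
    have := hψ₀ t ht
    field_simp
  have hempty : (fun j : Fin (M + 3) => (j : ℕ)) = tailOffsets M ![0, 1, 2] :=
    eq_tailOffsets (fun _ => rfl) fun j => by fin_cases j <;> rfl
  have hthree : (fun j : Fin (M + 3) => if (j : ℕ) = M + 3 - 1 then M + 3 + 2 else (j : ℕ)) =
      tailOffsets M ![0, 1, 5] :=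
    eq_tailOffsets (fun i => if_neg (by rw [Fin.val_castAdd]; omega))
      fun j => by fin_cases j <;> simp
  have htwo_one : (fun j : Fin (M + 3) => if (j : ℕ) = M + 3 - 1 then (j : ℕ) + 2 else
      if (j : ℕ) = M + 3 - 2 then (j : ℕ) + 1 else (j : ℕ)) = tailOffsets M ![0, 2, 4] :=
    eq_tailOffsets (fun i => by
      rw [Fin.val_castAdd, if_neg (by omega), if_neg (by omega)])
      fun j => by fin_cases j <;> simp
  have hone_one_one : (fun j : Fin (M + 3) => if M + 3 - 3 ≤ (j : ℕ) then (j : ℕ) + 1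
      else (j : ℕ)) = tailOffsets M ![1, 2, 3] :=
    eq_tailOffsets (fun i => if_neg (by simp)) fun j => by fin_cases j <;> simp
  rw [hempty, hthree, htwo_one, hone_one_one,
    hankelDet_third_deriv_sum hI hriccati hwψ (hw.div_const 2) M hz, deriv_div_const]
  ring

/-- Differential formula (A.4): `τ_N[0,…,N-2,N+2] + 2 τ_N[0,…,N-3,N-1,N+1] + τ_N[0,…,N-4,N-2,N-1,N] = τ_N''' + (3/2) w τ_N' + (1/2) w' τ_N`. -/
theorem tau_shift_third_deriv_sum
    (I : Set ℝ) (hIopen : IsOpen I) (hIconn : I.OrdConnected)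
    (w ψ0 : ℝ → ℝ)
    (hw_smooth : ContDiffOn ℝ (⊤ : ℕ∞) w I)
    (hψ0_smooth : ContDiffOn ℝ (⊤ : ℕ∞) ψ0 I)
    (hψ0_ne : ∀ z ∈ I, ψ0 z ≠ 0)
    (α : ℝ)
    (hL1 : ∀ z ∈ I, 2 * w z * deriv ψ0 z - deriv w z * ψ0 z - 4 * α * ψ0 z = 0)
    (hL2 : ∀ z ∈ I, deriv (deriv ψ0) z + (w z - 2 * z) * ψ0 z = 0)
    (ψ : ℕ → ℝ → ℝ)
    (hψ_zero : ψ 0 = ψ0)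
    (hψ_rec : ∀ n : ℕ, ∀ z ∈ I, ψ (n + 1) z =
      deriv (ψ n) z + (w z / (2 * ψ0 z)) *
        ∑ k ∈ Finset.range n, ψ k z * ψ (n - 1 - k) z)
    (N : ℕ) (hN : 3 ≤ N) :
    ∀ z ∈ I,
      tauShift ψ N (fun j => if (j : ℕ) = N - 1 then N + 2 else (j : ℕ)) z
        + 2 * tauShift ψ N (fun j => if (j : ℕ) = N - 1 then (j : ℕ) + 2 else if (j : ℕ) = N - 2 then (j : ℕ) + 1 else (j : ℕ)) z
        + tauShift ψ N (fun j => if N - 3 ≤ (j : ℕ) then (j : ℕ) + 1 else (j : ℕ)) z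
      = deriv (deriv (deriv (fun t => tauShift ψ N (fun j => (j : ℕ)) t))) z
        + (3 / 2) * w z * deriv (fun t => tauShift ψ N (fun j => (j : ℕ)) t) z
        + (1 / 2) * deriv w z * tauShift ψ N (fun j => (j : ℕ)) z := by
  subst hψ_zero
  have hψ := contDiffOn_of_riccati_rec hIopen (hw_smooth.div (contDiffOn_const.mul hψ0_smooth)
    fun z hz => mul_ne_zero two_ne_zero (hψ0_ne z hz)) hψ0_smooth hψ_rec
  exact fun z => tau_shift_third_deriv_sum_general hIopen (hw_smooth.differentiableOn (by simp))
    (fun n => (hψ n).differentiableOn (by simp)) hψ0_ne hψ_rec hN
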